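/- Let Φ be a Leonard system with parameter array ({θ_i}; {θ*_i}; {φ_i}; {ϕ_i}), φ = φ_1⋯φ_d, ϕ = ϕ_1⋯ϕ_d. Then tr(E_0 E*_0) = ϕ/(η_d(θ_0) η*_d(θ*_0)), tr(E_0 E*_d) = φ/(η_d(θ_0) τ*_d(θ*_d)), tr(E_d E*_0) = φ/(τ_d(θ_d) η*_d(θ*_0)), and tr(E_d E*_d) = ϕ/(τ_d(θ_d) τ*_d(θ*_d)). -/

import Mathlib

open Matrix Polynomial

/-- A Leonard system in the matrix algebra `Mat_{d+1}(K)`: multiplicity-free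
elements `A`, `Astar` with orderings `E`, `Estar` of their primitive idempotents
satisfying the irreducible-tridiagonality conditions. -/
structure LeonardSystem (K : Type*) [Field K] (d : ℕ) where
  A : Matrix (Fin (d+1)) (Fin (d+1)) K
  Astar : Matrix (Fin (d+1)) (Fin (d+1)) K
  E : Fin (d+1) → Matrix (Fin (d+1)) (Fin (d+1)) K
  Estar : Fin (d+1) → Matrix (Fin (d+1)) (Fin (d+1)) K
  θ : Fin (d+1) → K
  θs : Fin (d+1) → K
  θ_inj : Function.Injective θ
  θs_inj : Function.Injective θs
  E_ne : ∀ i, E i ≠ 0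
  Es_ne : ∀ i, Estar i ≠ 0
  E_mul : ∀ i j, E i * E j = if i = j then E i else 0
  Es_mul : ∀ i j, Estar i * Estar j = if i = j then Estar i else 0
  E_sum : ∑ i, E i = 1
  Es_sum : ∑ i, Estar i = 1
  A_eq : A = ∑ i, θ i • E i
  As_eq : Astar = ∑ i, θs i • Estar i
  trid0 : ∀ i j : Fin (d+1), ((i : ℤ) - (j : ℤ)).natAbs > 1 → E i * Astar * E j = 0
  trid1 : ∀ i j : Fin (d+1), ((i : ℤ) - (j : ℤ)).natAbs = 1 → E i * Astar * E j ≠ 0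
  strid0 : ∀ i j : Fin (d+1), ((i : ℤ) - (j : ℤ)).natAbs > 1 → Estar i * A * Estar j = 0
  strid1 : ∀ i j : Fin (d+1), ((i : ℤ) - (j : ℤ)).natAbs = 1 → Estar i * A * Estar j ≠ 0

namespace LeonardSystem

variable {K : Type*} [Field K] {d : ℕ}

/-- Eigenvalues indexed by `ℕ` (junk value outside range). -/
def θN (L : LeonardSystem K d) (i : ℕ) : K := if h : i < d + 1 then L.θ ⟨i, h⟩ else 0

def θsN (L : LeonardSystem K d) (i : ℕ) : K := if h : i < d + 1 then L.θs ⟨i, h⟩ else 0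

/-- `τ_i(A) = (A-θ₀)(A-θ₁)⋯(A-θ_{i-1})`. -/
def tauA (L : LeonardSystem K d) : ℕ → Matrix (Fin (d+1)) (Fin (d+1)) K
  | 0 => 1
  | i + 1 => L.tauA i * (L.A - L.θN i • 1)

/-- `η_i(A) = (A-θ_d)(A-θ_{d-1})⋯(A-θ_{d-i+1})`. -/
def etaA (L : LeonardSystem K d) : ℕ → Matrix (Fin (d+1)) (Fin (d+1)) K
  | 0 => 1
  | i + 1 => L.etaA i * (L.A - L.θN (d - i) • 1)

/-- `τ*_i(A*)`. -/
def tausA (L : LeonardSystem K d) : ℕ → Matrix (Fin (d+1)) (Fin (d+1)) K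
  | 0 => 1
  | i + 1 => L.tausA i * (L.Astar - L.θsN i • 1)

/-- `η*_i(A*)`. -/
def etasA (L : LeonardSystem K d) : ℕ → Matrix (Fin (d+1)) (Fin (d+1)) K
  | 0 => 1
  | i + 1 => L.etasA i * (L.Astar - L.θsN (d - i) • 1)

/-- Scalar `τ_i(x)`. -/
def tauS (L : LeonardSystem K d) (i : ℕ) (x : K) : K := ∏ j ∈ Finset.range i, (x - L.θN j)

/-- Scalar `η_i(x)`. -/
def etaS (L : LeonardSystem K d) (i : ℕ) (x : K) : K := ∏ j ∈ Finset.range i, (x - L.θN (d - j))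

/-- Scalar `τ*_i(x)`. -/
def tausS (L : LeonardSystem K d) (i : ℕ) (x : K) : K := ∏ j ∈ Finset.range i, (x - L.θsN j)

/-- Scalar `η*_i(x)`. -/
def etasS (L : LeonardSystem K d) (i : ℕ) (x : K) : K := ∏ j ∈ Finset.range i, (x - L.θsN (d - j))

/-- First split sequence `φ_i`. -/
noncomputable def varphi (L : LeonardSystem K d) (i : ℕ) : K :=
  (L.θsN 0 - L.θsN i) * (L.tauA i * L.Estar 0).trace / (L.tauA (i-1) * L.Estar 0).trace

/-- Second split sequence `ϕ_i`. -/
noncomputable def phi (L : LeonardSystem K d) (i : ℕ) : K :=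
  (L.θsN 0 - L.θsN i) * (L.etaA i * L.Estar 0).trace / (L.etaA (i-1) * L.Estar 0).trace

/-- `φ₁φ₂⋯φ_r`. -/
noncomputable def varphiProd (L : LeonardSystem K d) (r : ℕ) : K :=
  ∏ j ∈ Finset.range r, L.varphi (j + 1)

/-- `ϕ₁ϕ₂⋯ϕ_r`. -/
noncomputable def phiProd (L : LeonardSystem K d) (r : ℕ) : K :=
  ∏ j ∈ Finset.range r, L.phi (j + 1)

/-- `φ_d φ_{d-1} ⋯ φ_{d-r+1}`. -/
noncomputable def varphiRevProd (L : LeonardSystem K d) (r : ℕ) : K :=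
  ∏ j ∈ Finset.range r, L.varphi (d - j)

/-- `ϕ_d ϕ_{d-1} ⋯ ϕ_{d-r+1}`. -/
noncomputable def phiRevProd (L : LeonardSystem K d) (r : ℕ) : K :=
  ∏ j ∈ Finset.range r, L.phi (d - j)

end LeonardSystem

/-!
The product defining `φ` telescopes to `φ = η*_d(θ*_0) tr(τ_d(A) E*_0)`, and
`τ_d(A) = τ_d(θ_d) E_d`; this is the formula for `tr(E_d E*_0)`. Since `A` is tridiagonal with
respect to the `E*_i`, the corner `E*_d p(A) E*_0` with `deg p ≤ d` depends only on the coefficient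
of degree `d` in `p`. Writing `E_k` as a polynomial in `A` then compares `E*_d E_0 E*_0` with
`E*_d E_d E*_0`; together with the dual comparison this relates `tr(E_0 E*_0)` to
`tr(E_d E*_d)`. Inverting the order of the `E_i` exchanges `φ` and `ϕ` and gives everything else.
-/

section OuterProduct

variable {K n : Type*} [Fintype n] {M : Matrix n n K}

/-- A square matrix of rank at most one, presented as a column times a row so that products with
it can be computed. -/
def IsOuterProduct [Mul K] (M : Matrix n n K) : Prop := ∃ u v : n → K, M = vecMulVec u v

theorem IsOuterProduct.mul_mul_self [CommSemiring K] (hM : IsOuterProduct M)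
    (X : Matrix n n K) : M * X * M = (X * M).trace • M := by
  obtain ⟨u, v, rfl⟩ := hM
  rw [vecMulVec_mul, vecMulVec_mul_vecMulVec, mul_vecMulVec, trace_vecMulVec,
    dotProduct_comm (X *ᵥ u), dotProduct_mulVec, vecMulVec_smul]

theorem IsOuterProduct.mul_mul_ne_zero [Semiring K] [NoZeroDivisors K] (hM : IsOuterProduct M)
    {X Y : Matrix n n K} (hX : X * M ≠ 0) (hY : M * Y ≠ 0) : X * M * Y ≠ 0 := by
  obtain ⟨u, v, rfl⟩ := hM
  rw [mul_vecMulVec] at hX ⊢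
  rw [vecMulVec_mul] at hY ⊢
  simp only [ne_eq, vecMulVec_eq_zero, not_or] at *
  exact ⟨hX.1, hY.2⟩

theorem IsOuterProduct.trace_eq_one [CommRing K] [IsDomain K] (hM : IsOuterProduct M)
    (hidem : IsIdempotentElem M) (hne : M ≠ 0) : M.trace = 1 := by
  classical
  apply smul_left_injective K hne
  simpa [hidem.eq] using (hM.mul_mul_self 1).symm

theorem mulVec_eq_ite_of_orthogonalIdempotents [Semiring K] [DecidableEq n] {ι : Type*}
    [DecidableEq ι] {F : ι → Matrix n n K} (hF : OrthogonalIdempotents F) {g : ι → n → K}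
    (hg : ∀ i, F i *ᵥ g i = g i) (i j : ι) : F i *ᵥ g j = if i = j then g j else 0 := by
  rw [← hg j, mulVec_mulVec, hF.mul_eq]
  split_ifs with hij
  · rw [hij]
  · exact zero_mulVec _

theorem linearIndependent_of_orthogonalIdempotents [CommRing K] [IsDomain K] [DecidableEq n]
    {ι : Type*} {F : ι → Matrix n n K} (hF : OrthogonalIdempotents F) {g : ι → n → K}
    (hg : ∀ i, F i *ᵥ g i = g i) (hne : ∀ i, g i ≠ 0) : LinearIndependent K g := by
  classical
  refine linearIndependent_iff'.mpr fun s a ha i hi => ?_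
  have hsum := congrArg (F i *ᵥ ·) ha
  simpa [mulVec_sum, mulVec_smul, mulVec_eq_ite_of_orthogonalIdempotents hF hg, hi, hne i]
    using hsum

theorem isOuterProduct_of_orthogonalIdempotents [Field K] [DecidableEq n]
    {F : n → Matrix n n K} (hF : OrthogonalIdempotents F) (hne : ∀ i, F i ≠ 0) (i : n) :
    IsOuterProduct (F i) := by
  have hex (k : n) : ∃ w, F k *ᵥ w ≠ 0 := by
    by_contra! hzero
    exact hne k (ext_of_mulVec_single fun j => by rw [hzero, zero_mulVec])
  choose w hw using hex
  have hfix (k : n) : F k *ᵥ (F k *ᵥ w k) = F k *ᵥ w k := by rw [mulVec_mulVec, (hF.idem k).eq]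
  let b := basisOfLinearIndependentOfCardEqFinrank' _
    (linearIndependent_of_orthogonalIdempotents hF hfix hw) (by simp)
  have hb (k : n) : F i *ᵥ b k = if i = k then b k else 0 := by
    simpa [b] using mulVec_eq_ite_of_orthogonalIdempotents hF hfix i k
  have hFi : (F i).toLin' = (b.coord i).smulRight (b i) := by
    refine b.ext fun k => ?_
    rw [toLin'_apply, hb]
    rcases eq_or_ne i k with rfl | hik
    · simp
    · simp [hik]
  refine ⟨b i, fun j => b.coord i (Pi.single j 1), ext_of_mulVec_single fun j => ?_⟩
  rw [← toLin'_apply, hFi, vecMulVec_mulVec]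
  simp

end OuterProduct

section SpectralDecomposition

variable {K R ι : Type*} [Fintype ι]

theorem mul_mul_mul_eq_sum [Semiring R] {F : ι → R} (hF : CompleteOrthogonalIdempotents F)
    (a x y b : R) : a * (x * y) * b = ∑ m, (a * x * F m) * (F m * y * b) := by
  calc a * (x * y) * b = a * x * (∑ m, F m) * (y * b) := by
        rw [hF.complete]; simp only [mul_assoc, one_mul]
    _ = ∑ m, (a * x * F m) * (F m * y * b) := by
        rw [Finset.mul_sum, Finset.sum_mul]
        refine Finset.sum_congr rfl fun m _ => ?_
        nth_rw 1 [← (hF.idem m).eq]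
        simp only [mul_assoc]

theorem aeval_mul_of_mul_eq_smul [CommSemiring K] [Semiring R] [Algebra K R] {B e : R} {c : K}
    (h : B * e = c • e) (p : K[X]) : aeval B p * e = p.eval c • e := by
  have hpow (n : ℕ) : B ^ n * e = c ^ n • e := by
    induction n with
    | zero => simp
    | succ n ih => rw [pow_succ, mul_assoc, h, mul_smul_comm, ih, smul_smul, pow_succ']
  rw [aeval_eq_sum_range, eval_eq_sum_range, Finset.sum_mul, Finset.sum_smul]
  exact Finset.sum_congr rfl fun n _ => by rw [smul_mul_assoc, hpow, smul_smul]

theorem aeval_sum_smul [CommSemiring K] [Semiring R] [Algebra K R] {F : ι → R}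
    (hF : CompleteOrthogonalIdempotents F) (c : ι → K) (p : K[X]) :
    aeval (∑ i, c i • F i) p = ∑ i, p.eval (c i) • F i := by
  classical
  have heigen (j : ι) : (∑ i, c i • F i) * F j = c j • F j := by
    simp [Finset.sum_mul, hF.mul_eq]
  rw [← mul_one (aeval _ p), ← hF.complete, Finset.mul_sum]
  exact Finset.sum_congr rfl fun j _ => aeval_mul_of_mul_eq_smul (heigen j) p

variable [DecidableEq ι]

/-- The product of the differences `c k - c j` over all `j ≠ k`: the derivative at `c k` of the
polynomial with root family `c`. For `θ` it is `η_d(θ₀)` at `0` and `τ_d(θ_d)` at `d`. -/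
def gapProd [CommRing K] (c : ι → K) (k : ι) : K := ∏ j ∈ Finset.univ.erase k, (c k - c j)

theorem gapProd_ne_zero [CommRing K] [IsDomain K] {c : ι → K} (hc : Function.Injective c) (k : ι) :
    gapProd c k ≠ 0 :=
  Finset.prod_ne_zero_iff.mpr fun _ hj => sub_ne_zero.mpr (hc.ne (Finset.ne_of_mem_erase hj).symm)

theorem gapProd_comp_equiv [CommRing K] {κ : Type*} [Fintype κ] [DecidableEq κ] (e : κ ≃ ι)
    (c : ι → K) (k : κ) : gapProd (c ∘ e) k = gapProd c (e k) :=
  Finset.prod_equiv e (by simp) (by simp)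

theorem aeval_nodal_erase [CommRing K] [Ring R] [Algebra K R] {F : ι → R}
    (hF : CompleteOrthogonalIdempotents F) (c : ι → K) (k : ι) :
    aeval (∑ i, c i • F i) (Lagrange.nodal (Finset.univ.erase k) c) = gapProd c k • F k := by
  rw [aeval_sum_smul hF, Finset.sum_eq_single k, Lagrange.eval_nodal, gapProd]
  · intro j _ hj
    rw [Lagrange.eval_nodal_at_node (Finset.mem_erase.mpr ⟨hj, Finset.mem_univ j⟩), zero_smul]
  · simp

end SpectralDecomposition

section GapProdFin

variable {K : Type*} [CommRing K] {d : ℕ} {c : Fin (d + 1) → K} {cN : ℕ → K}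

theorem gapProd_eq_prod_succAbove (c : Fin (d + 1) → K) (k : Fin (d + 1)) :
    gapProd c k = ∏ j, (c k - c (k.succAbove j)) := by
  rw [gapProd, ← Finset.compl_singleton, ← Fin.image_succAbove_univ,
    Finset.prod_image (Fin.succAbove_right_injective.injOn)]

theorem gapProd_last_eq_prod_range (hc : ∀ i : Fin (d + 1), cN i = c i) :
    gapProd c (Fin.last d) = ∏ j ∈ Finset.range d, (c (Fin.last d) - cN j) := by
  rw [gapProd_eq_prod_succAbove, Finset.prod_range]
  simp [← hc]

theorem gapProd_zero_eq_prod_range_succ (hc : ∀ i : Fin (d + 1), cN i = c i) :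
    gapProd c 0 = ∏ j ∈ Finset.range d, (c 0 - cN (j + 1)) := by
  rw [gapProd_eq_prod_succAbove, Finset.prod_range]
  simp [← hc]

theorem gapProd_zero_eq_prod_range_sub (hc : ∀ i : Fin (d + 1), cN i = c i) :
    gapProd c 0 = ∏ j ∈ Finset.range d, (c 0 - cN (d - j)) := by
  rw [gapProd_zero_eq_prod_range_succ hc, ← Finset.prod_range_reflect]
  refine Finset.prod_congr rfl fun j hj => ?_
  rw [show d - 1 - j + 1 = d - j by have := Finset.mem_range.mp hj; omega]

end GapProdFin

section Tridiagonal

variable {K R : Type*} {m d : ℕ}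

/-- `B` acts tridiagonally with respect to the ordered family of idempotents `F`. -/
def IsTridiagonal [Semiring R] (F : Fin m → R) (B : R) : Prop :=
  ∀ i j : Fin m, 1 < ((i : ℤ) - j).natAbs → F i * B * F j = 0

/-- `B` acts as an irreducible tridiagonal matrix with respect to the ordered family of
idempotents `F`: all blocks next to the diagonal are nonzero. -/
structure IsIrreducibleTridiagonal [Semiring R] (F : Fin m → R) (B : R) : Prop where
  isTridiagonal : IsTridiagonal F B
  ne_zero : ∀ i j : Fin m, ((i : ℤ) - j).natAbs = 1 → F i * B * F j ≠ 0

theorem IsTridiagonal.mul_pow_mul_eq_zero [Semiring R] {F : Fin m → R} {B : R}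
    (hB : IsTridiagonal F B) (hF : CompleteOrthogonalIdempotents F) {n : ℕ} {i j : Fin m}
    (hn : n < ((i : ℤ) - j).natAbs) : F i * B ^ n * F j = 0 := by
  induction n generalizing j with
  | zero =>
    have hij : i ≠ j := by rintro rfl; simp at hn
    simpa using hF.ortho hij
  | succ n ih =>
    rw [pow_succ, mul_mul_mul_eq_sum hF]
    refine Finset.sum_eq_zero fun k _ => ?_
    by_cases hk : n < ((i : ℤ) - k).natAbs
    · rw [ih hk, zero_mul]
    · rw [hB k j (by omega), mul_zero]

theorem IsTridiagonal.mul_aeval_mul [CommSemiring K] [Semiring R] [Algebra K R] {F : Fin m → R}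
    {B : R} (hB : IsTridiagonal F B) (hF : CompleteOrthogonalIdempotents F) {p : K[X]}
    {i j : Fin m} (hp : p.natDegree ≤ ((i : ℤ) - j).natAbs) :
    F i * aeval B p * F j =
      p.coeff ((i : ℤ) - j).natAbs • (F i * B ^ ((i : ℤ) - j).natAbs * F j) := by
  rw [aeval_eq_sum_range' (Nat.lt_succ_of_le hp), Finset.sum_range_succ, mul_add, add_mul,
    Finset.mul_sum, Finset.sum_mul, Finset.sum_eq_zero, zero_add, mul_smul_comm, smul_mul_assoc]
  intro n hn
  rw [mul_smul_comm, smul_mul_assoc, hB.mul_pow_mul_eq_zero hF (Finset.mem_range.mp hn), smul_zero]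

theorem IsTridiagonal.mul_aeval_mul_eq_zero [CommSemiring K] [Semiring R] [Algebra K R]
    {F : Fin m → R} {B : R} (hB : IsTridiagonal F B) (hF : CompleteOrthogonalIdempotents F)
    {p : K[X]} {i j : Fin m} (hp : p.natDegree < ((i : ℤ) - j).natAbs) :
    F i * aeval B p * F j = 0 := by
  rw [hB.mul_aeval_mul hF hp.le, coeff_eq_zero_of_natDegree_lt hp, zero_smul]

theorem IsTridiagonal.mul_aeval_mul_of_monic [CommSemiring K] [Semiring R] [Algebra K R]
    {F : Fin m → R} {B : R} (hB : IsTridiagonal F B) (hF : CompleteOrthogonalIdempotents F)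
    {p : K[X]} (hmonic : p.Monic) {i j : Fin m} (hp : p.natDegree = ((i : ℤ) - j).natAbs) :
    F i * aeval B p * F j = F i * B ^ p.natDegree * F j := by
  rw [hB.mul_aeval_mul hF hp.le, ← hp, hmonic.coeff_natDegree, one_smul]

theorem IsTridiagonal.gapProd_smul_mul_mul [CommRing K] [Nontrivial K] [Ring R] [Algebra K R]
    {F G : Fin (d + 1) → R} {c : Fin (d + 1) → K} (hB : IsTridiagonal F (∑ i, c i • G i))
    (hF : CompleteOrthogonalIdempotents F) (hG : CompleteOrthogonalIdempotents G)
    (k : Fin (d + 1)) :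
    gapProd c k • (F (Fin.last d) * G k * F 0) =
      F (Fin.last d) * (∑ i, c i • G i) ^ d * F 0 := by
  have hdeg : (Lagrange.nodal (Finset.univ.erase k) c).natDegree = d := by
    simp [Lagrange.natDegree_nodal]
  have hcorner := hB.mul_aeval_mul_of_monic hF (Lagrange.nodal_monic (v := c))
    (i := Fin.last d) (j := 0) (by rw [hdeg]; simp)
  rwa [hdeg, aeval_nodal_erase hG, mul_smul_comm, smul_mul_assoc] at hcorner

variable {n : Type*} [Fintype n] [DecidableEq n]

theorem IsIrreducibleTridiagonal.mul_pow_mul_ne_zero [Semiring K] [NoZeroDivisors K]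
    {F : Fin m → Matrix n n K} {B : Matrix n n K} (hB : IsIrreducibleTridiagonal F B)
    (hF : CompleteOrthogonalIdempotents F) (hne : ∀ i, F i ≠ 0)
    (hrank : ∀ i, IsOuterProduct (F i)) {l : ℕ} {i j : Fin m} (hl : l = ((i : ℤ) - j).natAbs) :
    F i * B ^ l * F j ≠ 0 := by
  induction l generalizing j with
  | zero =>
    obtain rfl : i = j := by omega
    simpa [(hF.idem i).eq] using hne i
  | succ l ih =>
    obtain ⟨j', hij', hj'j⟩ :
        ∃ j' : Fin m, l = ((i : ℤ) - j').natAbs ∧ ((j' : ℤ) - j).natAbs = 1 := by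
      rcases lt_or_gt_of_ne (show (i : ℕ) ≠ j by omega) with hij | hij
      · exact ⟨⟨j - 1, by omega⟩, by dsimp only; omega, by dsimp only; omega⟩
      · exact ⟨⟨j + 1, by omega⟩, by dsimp only; omega, by dsimp only; omega⟩
    -- Only the neighbour of `j` in the direction of `i` is within reach of both ends.
    have hpath : F i * B ^ (l + 1) * F j = F i * B ^ l * F j' * (F j' * B * F j) := by
      rw [pow_succ, mul_mul_mul_eq_sum hF]
      refine Finset.sum_eq_single j' (fun k _ hk => ?_) (by simp)
      by_cases hik : l < ((i : ℤ) - k).natAbs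
      · rw [hB.isTridiagonal.mul_pow_mul_eq_zero hF hik, zero_mul]
      · rw [hB.isTridiagonal k j (by omega), mul_zero]
    have hfactor : F i * B ^ l * F j' * (F j' * B * F j) = F i * B ^ l * F j' * (B * F j) := by
      rw [mul_assoc (F j'), ← mul_assoc, mul_assoc _ (F j') (F j'), (hF.idem j').eq]
    rw [hpath, hfactor]
    exact (hrank j').mul_mul_ne_zero (ih hij') (by rw [← mul_assoc]; exact hB.ne_zero j' j hj'j)

end Tridiagonal

namespace LeonardSystem

variable {K : Type*} [Field K] {d : ℕ} (L : LeonardSystem K d)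

theorem E_completeOrthogonalIdempotents : CompleteOrthogonalIdempotents L.E :=
  ⟨OrthogonalIdempotents.iff_mul_eq.mpr L.E_mul, L.E_sum⟩

theorem Estar_completeOrthogonalIdempotents : CompleteOrthogonalIdempotents L.Estar :=
  ⟨OrthogonalIdempotents.iff_mul_eq.mpr L.Es_mul, L.Es_sum⟩

theorem E_isOuterProduct (i : Fin (d + 1)) : IsOuterProduct (L.E i) :=
  isOuterProduct_of_orthogonalIdempotents
    L.E_completeOrthogonalIdempotents.toOrthogonalIdempotents L.E_ne i

theorem Estar_isOuterProduct (i : Fin (d + 1)) : IsOuterProduct (L.Estar i) :=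
  isOuterProduct_of_orthogonalIdempotents
    L.Estar_completeOrthogonalIdempotents.toOrthogonalIdempotents L.Es_ne i

theorem A_isIrreducibleTridiagonal : IsIrreducibleTridiagonal L.Estar L.A := ⟨L.strid0, L.strid1⟩

theorem Astar_isIrreducibleTridiagonal : IsIrreducibleTridiagonal L.E L.Astar :=
  ⟨L.trid0, L.trid1⟩

theorem θN_val (i : Fin (d + 1)) : L.θN i = L.θ i := dif_pos i.isLt

theorem θsN_val (i : Fin (d + 1)) : L.θsN i = L.θs i := dif_pos i.isLt

theorem Estar_last_mul_A_pow_mul_Estar_zero (k : Fin (d + 1)) :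
    L.Estar (Fin.last d) * L.A ^ d * L.Estar 0 =
      gapProd L.θ k • (L.Estar (Fin.last d) * L.E k * L.Estar 0) := by
  have hA := L.A_isIrreducibleTridiagonal.isTridiagonal
  rw [L.A_eq] at hA ⊢
  exact (hA.gapProd_smul_mul_mul L.Estar_completeOrthogonalIdempotents
    L.E_completeOrthogonalIdempotents k).symm

theorem E_last_mul_Astar_pow_mul_E_zero (k : Fin (d + 1)) :
    L.E (Fin.last d) * L.Astar ^ d * L.E 0 =
      gapProd L.θs k • (L.E (Fin.last d) * L.Estar k * L.E 0) := by
  have hAs := L.Astar_isIrreducibleTridiagonal.isTridiagonal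
  rw [L.As_eq] at hAs ⊢
  exact (hAs.gapProd_smul_mul_mul L.E_completeOrthogonalIdempotents
    L.Estar_completeOrthogonalIdempotents k).symm

theorem E_mul_Estar_zero_ne_zero (k : Fin (d + 1)) : L.E k * L.Estar 0 ≠ 0 := by
  intro hzero
  have hne : L.Estar (Fin.last d) * L.A ^ d * L.Estar 0 ≠ 0 :=
    L.A_isIrreducibleTridiagonal.mul_pow_mul_ne_zero L.Estar_completeOrthogonalIdempotents
      L.Es_ne L.Estar_isOuterProduct (by simp)
  apply hne
  rw [L.Estar_last_mul_A_pow_mul_Estar_zero k, mul_assoc, hzero, mul_zero, smul_zero]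

theorem trace_mul_gapProd_zero_eq_last :
    (L.E 0 * L.Estar 0).trace * (gapProd L.θ 0 * gapProd L.θs 0) =
      (L.E (Fin.last d) * L.Estar (Fin.last d)).trace *
        (gapProd L.θ (Fin.last d) * gapProd L.θs (Fin.last d)) := by
  have hswap := (L.Estar_last_mul_A_pow_mul_Estar_zero 0).symm.trans
    (L.Estar_last_mul_A_pow_mul_Estar_zero (Fin.last d))
  have hswap_star := (L.E_last_mul_Astar_pow_mul_E_zero 0).symm.trans
    (L.E_last_mul_Astar_pow_mul_E_zero (Fin.last d))
  -- Both sides are the coefficient of `E_d E*_0` in a multiple of `E_d E*_d E_0 E*_0`.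
  apply smul_left_injective K (L.E_mul_Estar_zero_ne_zero (Fin.last d))
  calc ((L.E 0 * L.Estar 0).trace * (gapProd L.θ 0 * gapProd L.θs 0)) •
        (L.E (Fin.last d) * L.Estar 0)
      = gapProd L.θ 0 • ((gapProd L.θs 0 • (L.E (Fin.last d) * L.Estar 0 * L.E 0)) *
          L.Estar 0) := by
        rw [smul_mul_assoc, mul_assoc (L.E _), mul_assoc (L.E _),
          (L.Estar_isOuterProduct 0).mul_mul_self, mul_smul_comm, smul_smul, smul_smul]
        congr 1
        ring
    _ = gapProd L.θs (Fin.last d) • (L.E (Fin.last d) *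
          (gapProd L.θ 0 • (L.Estar (Fin.last d) * L.E 0 * L.Estar 0))) := by
        rw [hswap_star, smul_mul_assoc, mul_smul_comm, smul_comm]
        simp only [mul_assoc]
    _ = ((L.E (Fin.last d) * L.Estar (Fin.last d)).trace *
          (gapProd L.θ (Fin.last d) * gapProd L.θs (Fin.last d))) •
          (L.E (Fin.last d) * L.Estar 0) := by
        rw [hswap, mul_smul_comm, ← mul_assoc, ← mul_assoc, (L.E_isOuterProduct _).mul_mul_self,
          smul_mul_assoc, smul_smul, smul_smul, trace_mul_comm]
        congr 1
        ring

theorem tauA_eq_aeval (i : ℕ) : L.tauA i = aeval L.A (Lagrange.nodal (Finset.range i) L.θN) := by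
  induction i with
  | zero => simp [tauA]
  | succ i ih =>
    rw [tauA, ih, Lagrange.nodal, Lagrange.nodal, Finset.prod_range_succ, map_mul]
    simp [Algebra.algebraMap_eq_smul_one]

theorem tauA_eq_sum (i : ℕ) : L.tauA i = ∑ k, L.tauS i (L.θ k) • L.E k := by
  rw [tauA_eq_aeval, L.A_eq, aeval_sum_smul L.E_completeOrthogonalIdempotents]
  simp only [Lagrange.eval_nodal, tauS]

theorem tauS_eq_zero {i : ℕ} {k : Fin (d + 1)} (hk : (k : ℕ) < i) : L.tauS i (L.θ k) = 0 :=
  Finset.prod_eq_zero (Finset.mem_range.mpr hk) (by rw [θN_val, sub_self])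

theorem tauS_ne_zero (i : Fin (d + 1)) : L.tauS i (L.θ i) ≠ 0 := by
  refine Finset.prod_ne_zero_iff.mpr fun j hj => sub_ne_zero.mpr ?_
  have hji : j < i := Finset.mem_range.mp hj
  rw [show L.θN j = _ from L.θN_val ⟨j, by omega⟩]
  exact L.θ_inj.ne (Fin.ne_of_gt hji)

theorem tauS_last : L.tauS d (L.θ (Fin.last d)) = gapProd L.θ (Fin.last d) :=
  (gapProd_last_eq_prod_range L.θN_val).symm

theorem etaS_zero : L.etaS d (L.θ 0) = gapProd L.θ 0 :=
  (gapProd_zero_eq_prod_range_sub L.θN_val).symm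

theorem tausS_last : L.tausS d (L.θs (Fin.last d)) = gapProd L.θs (Fin.last d) :=
  (gapProd_last_eq_prod_range L.θsN_val).symm

theorem etasS_zero : L.etasS d (L.θs 0) = gapProd L.θs 0 :=
  (gapProd_zero_eq_prod_range_sub L.θsN_val).symm

theorem tauA_last : L.tauA d = gapProd L.θ (Fin.last d) • L.E (Fin.last d) := by
  rw [tauA_eq_sum, Finset.sum_eq_single (Fin.last d), tauS_last]
  · intro k _ hk
    rw [L.tauS_eq_zero (Fin.val_lt_last hk), zero_smul]
  · simp

theorem E_zero_mul_aeval_Astar_mul_tauA {p : K[X]} (i : Fin (d + 1)) (hp : p.natDegree ≤ i) :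
    L.E 0 * aeval L.Astar p * L.tauA i =
      L.tauS i (L.θ i) • (L.E 0 * aeval L.Astar p * L.E i) := by
  rw [tauA_eq_sum, Finset.mul_sum, Finset.sum_eq_single i, mul_smul_comm]
  · intro k _ hk
    rcases lt_or_gt_of_ne hk with hki | hik
    · rw [L.tauS_eq_zero hki, zero_smul, mul_zero]
    · rw [mul_smul_comm, L.Astar_isIrreducibleTridiagonal.isTridiagonal.mul_aeval_mul_eq_zero
        L.E_completeOrthogonalIdempotents, smul_zero]
      have : (i : ℕ) < k := hik
      simp only [Fin.val_zero]
      omega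
  · simp

theorem aeval_Astar_nodal_mul_tauA_mul_Estar_zero (i : ℕ) :
    aeval L.Astar (Lagrange.nodal (Finset.Ioc 0 i) L.θsN) * L.tauA i * L.Estar 0 =
      ((Lagrange.nodal (Finset.Ioc 0 i) L.θsN).eval (L.θs 0) * (L.tauA i * L.Estar 0).trace) •
        L.Estar 0 := by
  rw [L.As_eq, aeval_sum_smul L.Estar_completeOrthogonalIdempotents, Finset.sum_mul,
    Finset.sum_mul, Finset.sum_eq_single 0]
  · rw [smul_mul_assoc, smul_mul_assoc, (L.Estar_isOuterProduct 0).mul_mul_self, smul_smul]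
  · intro k _ hk
    have hk_pos : 0 < (k : ℕ) := Fin.pos_iff_ne_zero.mpr hk
    rcases le_or_gt (k : ℕ) i with hki | hik
    · rw [← L.θsN_val k, Lagrange.eval_nodal_at_node (Finset.mem_Ioc.mpr ⟨hk_pos, hki⟩),
        zero_smul, zero_mul, zero_mul]
    · rw [smul_mul_assoc, smul_mul_assoc, tauA_eq_aeval,
        L.A_isIrreducibleTridiagonal.isTridiagonal.mul_aeval_mul_eq_zero
          L.Estar_completeOrthogonalIdempotents, smul_zero]
      simpa [Lagrange.natDegree_nodal] using hik
  · simp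

theorem trace_tauA_mul_Estar_zero_ne_zero (i : Fin (d + 1)) :
    (L.tauA i * L.Estar 0).trace ≠ 0 := by
  intro htrace
  -- With nodes `θ*_1, …, θ*_i`, the matrix `p(A*)` annihilates `τ_i(A) E*_0` if the trace vanishes,
  -- whereas `E_0 p(A*) τ_i(A) = τ_i(θ_i) E_0 p(A*) E_i`, because `p` has degree `i`.
  let p := Lagrange.nodal (Finset.Ioc 0 (i : ℕ)) L.θsN
  have hdeg : p.natDegree = i := by simp [p, Lagrange.natDegree_nodal]
  have hmonic : p.Monic := Lagrange.nodal_monic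
  have hvanish : aeval L.Astar p * L.tauA i * L.Estar 0 = 0 := by
    rw [L.aeval_Astar_nodal_mul_tauA_mul_Estar_zero, htrace, mul_zero, zero_smul]
  have hcorner : L.E 0 * aeval L.Astar p * L.E i ≠ 0 := by
    rw [L.Astar_isIrreducibleTridiagonal.isTridiagonal.mul_aeval_mul_of_monic
      L.E_completeOrthogonalIdempotents hmonic (by simp [hdeg])]
    exact L.Astar_isIrreducibleTridiagonal.mul_pow_mul_ne_zero L.E_completeOrthogonalIdempotents
      L.E_ne L.E_isOuterProduct (by simp [hdeg])
  have hproduct : L.E 0 * aeval L.Astar p * L.E i * L.Estar 0 ≠ 0 :=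
    (L.E_isOuterProduct i).mul_mul_ne_zero hcorner (L.E_mul_Estar_zero_ne_zero i)
  apply smul_ne_zero (L.tauS_ne_zero i) hproduct
  rw [← smul_mul_assoc, ← L.E_zero_mul_aeval_Astar_mul_tauA i hdeg.le, mul_assoc (L.E 0),
    mul_assoc (L.E 0), hvanish, mul_zero]

theorem varphiProd_eq_prod_mul_trace {r : ℕ} (hr : r ≤ d) :
    L.varphiProd r =
      (∏ j ∈ Finset.range r, (L.θs 0 - L.θsN (j + 1))) * (L.tauA r * L.Estar 0).trace := by
  induction r with
  | zero =>
    simp [varphiProd, tauA, (L.Estar_isOuterProduct 0).trace_eq_one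
      (L.Estar_completeOrthogonalIdempotents.idem 0) (L.Es_ne 0)]
  | succ r ih =>
    have htrace := L.trace_tauA_mul_Estar_zero_ne_zero ⟨r, by omega⟩
    have hzero : L.θsN 0 = L.θs 0 := L.θsN_val 0
    rw [varphiProd, Finset.prod_range_succ, ← varphiProd, ih (by omega), Finset.prod_range_succ,
      varphi, hzero, Nat.add_sub_cancel]
    field_simp

theorem trace_E_last_mul_Estar_zero_mul_gapProd :
    (L.E (Fin.last d) * L.Estar 0).trace * (gapProd L.θ (Fin.last d) * gapProd L.θs 0) =
      L.varphiProd d := by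
  rw [L.varphiProd_eq_prod_mul_trace le_rfl, ← gapProd_zero_eq_prod_range_succ L.θsN_val, tauA_last,
    smul_mul_assoc, trace_smul, smul_eq_mul]
  ring

/-- The relative `Φ^⇓` of a Leonard system, in which the ordering of the `E_i` is inverted.
It exchanges the two split sequences. -/
def reverse : LeonardSystem K d where
  A := L.A
  Astar := L.Astar
  E := L.E ∘ Fin.revPerm
  Estar := L.Estar
  θ := L.θ ∘ Fin.revPerm
  θs := L.θs
  θ_inj := L.θ_inj.comp Fin.rev_injective
  θs_inj := L.θs_inj
  E_ne i := L.E_ne _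
  Es_ne := L.Es_ne
  E_mul i j := by simp [L.E_mul]
  Es_mul := L.Es_mul
  E_sum := (Equiv.sum_comp Fin.revPerm L.E).trans L.E_sum
  Es_sum := L.Es_sum
  A_eq := L.A_eq.trans (Equiv.sum_comp Fin.revPerm fun i => L.θ i • L.E i).symm
  As_eq := L.As_eq
  trid0 i j h := L.trid0 _ _ (by simp only [Fin.revPerm_apply, Fin.val_rev]; omega)
  trid1 i j h := L.trid1 _ _ (by simp only [Fin.revPerm_apply, Fin.val_rev]; omega)
  strid0 := L.strid0
  strid1 := L.strid1

theorem reverse_θN {i : ℕ} (hi : i ≤ d) : L.reverse.θN i = L.θN (d - i) := by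
  have hrev := L.θN_val (Fin.rev ⟨i, by omega⟩)
  rw [Fin.val_rev, Nat.add_sub_add_right] at hrev
  exact (L.reverse.θN_val ⟨i, by omega⟩).trans hrev.symm

theorem reverse_tauA {i : ℕ} (hi : i ≤ d + 1) : L.reverse.tauA i = L.etaA i := by
  induction i with
  | zero => rfl
  | succ i ih =>
    rw [tauA, etaA, ih (by omega), L.reverse_θN (by omega)]
    rfl

theorem reverse_varphiProd {r : ℕ} (hr : r ≤ d + 1) : L.reverse.varphiProd r = L.phiProd r := by
  refine Finset.prod_congr rfl fun j hj => ?_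
  have hjr := Finset.mem_range.mp hj
  rw [varphi, phi, L.reverse_tauA (by omega), L.reverse_tauA (by omega)]
  rfl

theorem reverse_E_zero : L.reverse.E 0 = L.E (Fin.last d) := congrArg L.E (Fin.rev_zero d)

theorem reverse_E_last : L.reverse.E (Fin.last d) = L.E 0 := congrArg L.E (Fin.rev_last d)

theorem gapProd_reverse_θ_zero : gapProd L.reverse.θ 0 = gapProd L.θ (Fin.last d) := by
  simp [reverse, gapProd_comp_equiv]

theorem gapProd_reverse_θ_last : gapProd L.reverse.θ (Fin.last d) = gapProd L.θ 0 := by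
  simp [reverse, gapProd_comp_equiv]

theorem trace_E_zero_mul_Estar_zero_mul_gapProd :
    (L.E 0 * L.Estar 0).trace * (gapProd L.θ 0 * gapProd L.θs 0) = L.phiProd d := by
  rw [← L.reverse_varphiProd d.le_succ, ← trace_E_last_mul_Estar_zero_mul_gapProd, reverse_E_last,
    gapProd_reverse_θ_last]
  rfl

theorem trace_E_last_mul_Estar_last_mul_gapProd :
    (L.E (Fin.last d) * L.Estar (Fin.last d)).trace *
      (gapProd L.θ (Fin.last d) * gapProd L.θs (Fin.last d)) = L.phiProd d := by
  rw [← trace_mul_gapProd_zero_eq_last, trace_E_zero_mul_Estar_zero_mul_gapProd]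

theorem trace_E_zero_mul_Estar_last_mul_gapProd :
    (L.E 0 * L.Estar (Fin.last d)).trace * (gapProd L.θ 0 * gapProd L.θs (Fin.last d)) =
      L.varphiProd d := by
  have hrev := L.reverse.trace_mul_gapProd_zero_eq_last
  rw [reverse_E_zero, reverse_E_last, gapProd_reverse_θ_zero, gapProd_reverse_θ_last] at hrev
  exact hrev.symm.trans L.trace_E_last_mul_Estar_zero_mul_gapProd

end LeonardSystem

/-- The four corner traces `tr(E_0E*_0)`, `tr(E_0E*_d)`, `tr(E_dE*_0)`, `tr(E_dE*_d)`. -/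
theorem LeonardSystem.trace_corners {K : Type*} [Field K] {d : ℕ}
    (L : LeonardSystem K d) :
    (L.E 0 * L.Estar 0).trace = L.phiProd d / (L.etaS d (L.θ 0) * L.etasS d (L.θs 0)) ∧
    (L.E 0 * L.Estar (Fin.last d)).trace =
      L.varphiProd d / (L.etaS d (L.θ 0) * L.tausS d (L.θs (Fin.last d))) ∧
    (L.E (Fin.last d) * L.Estar 0).trace =
      L.varphiProd d / (L.tauS d (L.θ (Fin.last d)) * L.etasS d (L.θs 0)) ∧
    (L.E (Fin.last d) * L.Estar (Fin.last d)).trace =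
      L.phiProd d / (L.tauS d (L.θ (Fin.last d)) * L.tausS d (L.θs (Fin.last d))) := by
  have hθ (k : Fin (d + 1)) : gapProd L.θ k ≠ 0 := gapProd_ne_zero L.θ_inj k
  have hθs (k : Fin (d + 1)) : gapProd L.θs k ≠ 0 := gapProd_ne_zero L.θs_inj k
  rw [L.etaS_zero, L.etasS_zero, L.tauS_last, L.tausS_last]
  exact ⟨eq_div_of_mul_eq (mul_ne_zero (hθ _) (hθs _)) L.trace_E_zero_mul_Estar_zero_mul_gapProd,
    eq_div_of_mul_eq (mul_ne_zero (hθ _) (hθs _)) L.trace_E_zero_mul_Estar_last_mul_gapProd,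
    eq_div_of_mul_eq (mul_ne_zero (hθ _) (hθs _)) L.trace_E_last_mul_Estar_zero_mul_gapProd,
    eq_div_of_mul_eq (mul_ne_zero (hθ _) (hθs _)) L.trace_E_last_mul_Estar_last_mul_gapProd⟩
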